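/- There exists a constant c > 0 such that for every integer n ≥ 2 and every real polynomial p in two variables of total degree at most n, the maximum of |p| over the closed unit disk K = {x ∈ ℝ² : x₁² + x₂² ≤ 1} satisfies ‖p‖_K ≤ c (log n)² · max_{0≤j≤n, 0≤k≤2n} |p(r_j cos φ_k, r_j sin φ_k)|, where r_j = 1/2 + (1/2)cos(jπ/n) for 0 ≤ j ≤ n and φ_k = 2πk/(2n+1) for 0 ≤ k ≤ 2n. -/

import Mathlib

open MvPolynomial Real Set

/-!
In polar coordinates `p` is a trigonometric polynomial of degree at most `n` in the angle and, since
`r = 1/2 + 1/2 cos ψ`, an even one in `ψ` along every ray. A trigonometric polynomial of degree `n`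
is `e^{-inθ}` times an algebraic polynomial of degree at most `2n` on the unit circle, so its size
is controlled by interpolation at the `N`-th roots of unity, whose Lebesgue constant, a mean of
absolute values of Dirichlet kernels, is at most `3 + 2 log N`. For the angle take `N = 2n + 1`. For
the radius, evenness makes the nodes `jπ/n`, `0 ≤ j ≤ n`, determine the values at all `2n`-th roots
of unity. This is one node too few, but by evenness the extreme coefficients coincide, and their
sum is the mean of the nodal values, so the leading term can be bounded separately.
-/

theorem eval_eq_eval_erase_add {R : Type*} [Semiring R] (P : Polynomial R) (m : ℕ) (z : R) :
    P.eval z = (P.erase m).eval z + P.coeff m * z ^ m := by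
  conv_lhs => rw [← P.monomial_add_erase m]
  rw [Polynomial.eval_add, Polynomial.eval_monomial, add_comm]

theorem natDegree_erase_lt {R : Type*} [Semiring R] {P : Polynomial R} {N : ℕ} (hN : N ≠ 0)
    (hP : P.natDegree ≤ N) : (P.erase N).natDegree < N := by
  refine lt_of_le_of_ne ?_ fun h => ?_
  · exact (Polynomial.natDegree_le_natDegree (Polynomial.degree_erase_le P N)).trans hP
  · have hlead : (P.erase N).leadingCoeff = 0 := by
      rw [Polynomial.leadingCoeff, h, Polynomial.erase_same]
    rw [Polynomial.leadingCoeff_eq_zero.1 hlead, Polynomial.natDegree_zero] at h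
    exact hN h.symm

section RootsOfUnity

variable {K : Type*} [Field K] {ω : K} {N : ℕ} {P : Polynomial K}

theorem sum_pow_mul_inv_pow_of_isPrimitiveRoot (hω : IsPrimitiveRoot ω N) {m j : ℕ}
    (hm : m < N) (hj : j < N) :
    ∑ k ∈ Finset.range N, (ω ^ k) ^ m * ((ω ^ k)⁻¹) ^ j = if m = j then (N : K) else 0 := by
  have hω₀ : ω ≠ 0 := hω.ne_zero (by omega)
  have hgeom : ∀ k, (ω ^ k) ^ m * ((ω ^ k)⁻¹) ^ j = (ω ^ m / ω ^ j) ^ k := fun k => by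
    rw [inv_pow, div_pow, ← div_eq_mul_inv, pow_right_comm, pow_right_comm ω k j]
  simp only [hgeom]
  split_ifs with h
  · simp [h, hω₀]
  · have hne : ω ^ m / ω ^ j ≠ 1 := fun h₁ =>
      h (hω.pow_inj hm hj ((div_eq_one_iff_eq (pow_ne_zero j hω₀)).1 h₁))
    have hone : (ω ^ m / ω ^ j) ^ N = 1 := by
      rw [div_pow, pow_right_comm, pow_right_comm ω j, hω.pow_eq_one, one_pow, one_pow, div_one]
    rw [geom_sum_eq hne, hone, sub_self, zero_div]

theorem natCast_mul_coeff_eq_sum_eval (hω : IsPrimitiveRoot ω N) (hP : P.natDegree < N) {j : ℕ}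
    (hj : j < N) :
    N * P.coeff j = ∑ k ∈ Finset.range N, P.eval (ω ^ k) * ((ω ^ k)⁻¹) ^ j := by
  symm
  calc ∑ k ∈ Finset.range N, P.eval (ω ^ k) * ((ω ^ k)⁻¹) ^ j
      = ∑ m ∈ Finset.range N, P.coeff m *
          ∑ k ∈ Finset.range N, (ω ^ k) ^ m * ((ω ^ k)⁻¹) ^ j := by
        simp only [Polynomial.eval_eq_sum_range' hP, Finset.sum_mul, Finset.mul_sum]
        rw [Finset.sum_comm]
        simp only [mul_assoc]
    _ = ∑ m ∈ Finset.range N, P.coeff m * if m = j then (N : K) else 0 :=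
        Finset.sum_congr rfl fun m hm => by
          rw [sum_pow_mul_inv_pow_of_isPrimitiveRoot hω (Finset.mem_range.1 hm) hj]
    _ = N * P.coeff j := by simp [hj, mul_comm]

theorem natCast_mul_eval_eq_sum_eval (hω : IsPrimitiveRoot ω N) (hP : P.natDegree < N) (z : K) :
    N * P.eval z =
      ∑ k ∈ Finset.range N, P.eval (ω ^ k) * ∑ j ∈ Finset.range N, (z / ω ^ k) ^ j := by
  calc N * P.eval z = ∑ j ∈ Finset.range N, N * P.coeff j * z ^ j := by
        simp only [Polynomial.eval_eq_sum_range' hP, Finset.mul_sum, mul_assoc]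
    _ = ∑ j ∈ Finset.range N, ∑ k ∈ Finset.range N,
          P.eval (ω ^ k) * ((ω ^ k)⁻¹) ^ j * z ^ j :=
        Finset.sum_congr rfl fun j hj => by
          rw [natCast_mul_coeff_eq_sum_eval hω hP (Finset.mem_range.1 hj), Finset.sum_mul]
    _ = ∑ k ∈ Finset.range N, P.eval (ω ^ k) * ∑ j ∈ Finset.range N, (z / ω ^ k) ^ j := by
        rw [Finset.sum_comm]
        refine Finset.sum_congr rfl fun k _ => ?_
        rw [Finset.mul_sum]
        exact Finset.sum_congr rfl fun j _ => by ring

-- Modulo `X ^ N - 1`, which vanishes at the nodes, `X ^ N` is aliased to the constant `1`.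
theorem sum_eval_eq_mul_coeff_zero_add_coeff (hω : IsPrimitiveRoot ω N) (hN : N ≠ 0)
    (hP : P.natDegree ≤ N) :
    ∑ k ∈ Finset.range N, P.eval (ω ^ k) = N * (P.coeff 0 + P.coeff N) := by
  have hnode : ∀ k, P.eval (ω ^ k) = (P.erase N).eval (ω ^ k) + P.coeff N := fun k => by
    rw [eval_eq_eval_erase_add P N, pow_right_comm, hω.pow_eq_one, one_pow, mul_one]
  have hmean := natCast_mul_coeff_eq_sum_eval hω (natDegree_erase_lt hN hP) (Nat.pos_of_ne_zero hN)
  simp only [pow_zero, mul_one] at hmean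
  rw [Finset.sum_congr rfl fun k _ => hnode k, Finset.sum_add_distrib, ← hmean,
    Polynomial.erase_ne _ hN.symm, Finset.sum_const, Finset.card_range, nsmul_eq_mul, mul_add]

end RootsOfUnity

/-- The analytic Dirichlet kernel `1 + e^{iθ} + ⋯ + e^{i(N-1)θ}`: the Lagrange basis polynomials of
the `N`-th roots of unity are `1 / N` times its translates. -/
noncomputable def analyticDirichletKernel (N : ℕ) (θ : ℝ) : ℂ :=
  ∑ j ∈ Finset.range N, (Circle.exp θ : ℂ) ^ j

section Kernel

variable (N : ℕ) (θ : ℝ)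

theorem periodic_analyticDirichletKernel :
    Function.Periodic (analyticDirichletKernel N) (2 * π) := fun θ => by
  simp only [analyticDirichletKernel, Circle.exp_add_two_pi]

theorem norm_analyticDirichletKernel_le : ‖analyticDirichletKernel N θ‖ ≤ N :=
  (norm_sum_le _ _).trans (by simp)

variable {θ} in
theorem norm_analyticDirichletKernel_le_inv_abs_sin (h : sin (θ / 2) ≠ 0) :
    ‖analyticDirichletKernel N θ‖ ≤ |sin (θ / 2)|⁻¹ := by
  have hden : ‖(Circle.exp θ : ℂ) - 1‖ = 2 * |sin (θ / 2)| := by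
    rw [Circle.coe_exp, mul_comm, Complex.norm_exp_I_mul_ofReal_sub_one, norm_eq_abs, abs_mul,
      abs_two]
  have hne : (Circle.exp θ : ℂ) ≠ 1 := fun h₁ => by simp [h₁, h] at hden
  have hnum : ‖(Circle.exp θ : ℂ) ^ N - 1‖ ≤ 2 := by
    refine (norm_sub_le _ _).trans ?_
    rw [norm_pow, Circle.norm_coe, one_pow, norm_one, one_add_one_eq_two]
  calc ‖analyticDirichletKernel N θ‖ ≤ 2 / (2 * |sin (θ / 2)|) := by
        rw [analyticDirichletKernel, geom_sum_eq hne, norm_div, hden]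
        gcongr
    _ = |sin (θ / 2)|⁻¹ := by field_simp

theorem inv_sin_le {x : ℝ} (h₀ : 0 < x) (hπ : x < π) :
    (sin x)⁻¹ ≤ π / 2 * (x⁻¹ + (π - x)⁻¹) := by
  have hhalf : ∀ {y : ℝ}, 0 < y → y ≤ π / 2 → (sin y)⁻¹ ≤ π / 2 * y⁻¹ := fun {y} hy hy' => by
    have hinv := inv_anti₀ (by positivity) (mul_le_sin hy.le hy')
    rwa [mul_inv, inv_div] at hinv
  have hx : 0 ≤ x⁻¹ := by positivity
  have hx' : 0 ≤ (π - x)⁻¹ := inv_nonneg.2 (sub_nonneg.2 hπ.le)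
  rcases le_total x (π / 2) with h | h
  · refine (hhalf h₀ h).trans ?_
    gcongr
    exact le_add_of_nonneg_right hx'
  · rw [← sin_pi_sub]
    refine (hhalf (sub_pos.2 hπ) (by linarith)).trans ?_
    gcongr
    exact le_add_of_nonneg_left hx

variable {N θ} in
theorem norm_analyticDirichletKernel_sub_le (hθ : |θ| ≤ π / N) {k : ℕ} (hk : k + 1 < N) :
    ‖analyticDirichletKernel N (θ - 2 * π * (k + 1 : ℕ) / N)‖ ≤
      N * (((k + 1 : ℕ) : ℝ)⁻¹ + ((N - 1 - k : ℕ) : ℝ)⁻¹) := by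
  have hN : (0 : ℝ) < N := by exact_mod_cast (show 0 < N by omega)
  have ha : (1 : ℝ) ≤ (k + 1 : ℕ) := by exact_mod_cast (show 1 ≤ k + 1 by omega)
  have hb : (1 : ℝ) ≤ (N - 1 - k : ℕ) := by exact_mod_cast (show 1 ≤ N - 1 - k by omega)
  have hab : ((k + 1 : ℕ) : ℝ) + (N - 1 - k : ℕ) = N := by
    exact_mod_cast (show k + 1 + (N - 1 - k) = N by omega)
  set a : ℝ := ((k + 1 : ℕ) : ℝ)
  set b : ℝ := ((N - 1 - k : ℕ) : ℝ)
  obtain ⟨hθ₁, hθ₂⟩ := abs_le.1 hθ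
  set x := π * a / N - θ / 2 with hx
  have hx_lower : π * a / (2 * N) ≤ x := by
    have : π * a / N = π * a / (2 * N) + π * a / (2 * N) := by field_simp; ring
    have : π / N / 2 ≤ π * a / (2 * N) := by
      rw [div_div, mul_comm (N : ℝ)]; gcongr; exact le_mul_of_one_le_right pi_pos.le ha
    linarith
  have hx_upper : π * b / (2 * N) ≤ π - x := by
    have : π - π * a / N = π * b / (2 * N) + π * b / (2 * N) := by
      rw [← hab]; field_simp; ring
    have : π / N / 2 ≤ π * b / (2 * N) := by
      rw [div_div, mul_comm (N : ℝ)]; gcongr; exact le_mul_of_one_le_right pi_pos.le hb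
    linarith
  have hx₀ : 0 < x := lt_of_lt_of_le (by positivity) hx_lower
  have hxπ : 0 < π - x := lt_of_lt_of_le (by positivity) hx_upper
  have hsin : 0 < sin x := sin_pos_of_pos_of_lt_pi hx₀ (sub_pos.1 hxπ)
  have habs : |sin ((θ - 2 * π * a / N) / 2)| = sin x := by
    rw [show (θ - 2 * π * a / N) / 2 = -x by rw [hx]; ring, sin_neg, abs_neg, abs_of_pos hsin]
  calc ‖analyticDirichletKernel N (θ - 2 * π * a / N)‖ ≤ (sin x)⁻¹ := by
        rw [← habs]
        exact norm_analyticDirichletKernel_le_inv_abs_sin N (abs_pos.1 (habs ▸ hsin))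
    _ ≤ π / 2 * (x⁻¹ + (π - x)⁻¹) := inv_sin_le hx₀ (sub_pos.1 hxπ)
    _ ≤ π / 2 * ((π * a / (2 * N))⁻¹ + (π * b / (2 * N))⁻¹) := by gcongr
    _ = N * (a⁻¹ + b⁻¹) := by field_simp

theorem sum_range_natCast_succ_inv_le_one_add_log :
    ∑ k ∈ Finset.range N, ((k + 1 : ℕ) : ℝ)⁻¹ ≤ 1 + log N := by
  have h := harmonic_le_one_add_log N
  rw [harmonic] at h
  push_cast at h ⊢
  exact h

theorem sum_range_sub_inv_eq (M : ℕ) :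
    ∑ k ∈ Finset.range M, ((M - k : ℕ) : ℝ)⁻¹ = ∑ k ∈ Finset.range M, ((k + 1 : ℕ) : ℝ)⁻¹ := by
  rw [← Finset.sum_range_reflect]
  refine Finset.sum_congr rfl fun k hk => ?_
  have hk := Finset.mem_range.1 hk
  rw [show M - (M - 1 - k) = k + 1 by omega]

variable {N θ} in
theorem sum_norm_analyticDirichletKernel_le_of_abs_le (hN : N ≠ 0) (hθ : |θ| ≤ π / N) :
    ∑ k ∈ Finset.range N, ‖analyticDirichletKernel N (θ - 2 * π * k / N)‖ ≤
      N * (3 + 2 * log N) := by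
  obtain ⟨M, rfl⟩ := Nat.exists_eq_succ_of_ne_zero hN
  have hharm : ∑ k ∈ Finset.range M, ((k + 1 : ℕ) : ℝ)⁻¹ ≤ 1 + log (M + 1 : ℕ) := by
    refine le_trans ?_ (sum_range_natCast_succ_inv_le_one_add_log (M + 1))
    rw [Finset.sum_range_succ]
    exact le_add_of_nonneg_right (by positivity)
  have htail := Finset.sum_le_sum fun k (hk : k ∈ Finset.range M) =>
    norm_analyticDirichletKernel_sub_le hθ (Nat.succ_lt_succ (Finset.mem_range.1 hk))
  rw [← Finset.mul_sum, Finset.sum_add_distrib, Nat.succ_eq_add_one, Nat.add_sub_cancel,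
    sum_range_sub_inv_eq] at htail
  calc ∑ k ∈ Finset.range (M + 1), ‖analyticDirichletKernel (M + 1) (θ - 2 * π * k / (M + 1 : ℕ))‖
      ≤ (M + 1 : ℕ) * (∑ k ∈ Finset.range M, ((k + 1 : ℕ) : ℝ)⁻¹ +
          ∑ k ∈ Finset.range M, ((k + 1 : ℕ) : ℝ)⁻¹) + (M + 1 : ℕ) := by
        rw [Finset.sum_range_succ']
        exact add_le_add htail (norm_analyticDirichletKernel_le _ _)
    _ ≤ (M + 1 : ℕ) * ((1 + log (M + 1 : ℕ)) + (1 + log (M + 1 : ℕ))) + (M + 1 : ℕ) := by gcongr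
    _ = (M + 1 : ℕ) * (3 + 2 * log (M + 1 : ℕ)) := by ring

theorem periodic_sum_range_sub_mul_div {M : Type*} [AddCommMonoid M] {f : ℝ → M} {c : ℝ}
    (hf : Function.Periodic f c) {N : ℕ} (hN : N ≠ 0) :
    Function.Periodic (fun θ => ∑ k ∈ Finset.range N, f (θ - c * k / N)) (c / N) := by
  intro θ
  obtain ⟨M, rfl⟩ := Nat.exists_eq_succ_of_ne_zero hN
  have hshift : ∀ k : ℕ, θ + c / (M + 1 : ℕ) - c * (k + 1 : ℕ) / (M + 1 : ℕ) =
      θ - c * k / (M + 1 : ℕ) := fun k => by push_cast; ring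
  have hwrap : θ + c / (M + 1 : ℕ) - c * (0 : ℕ) / (M + 1 : ℕ) =
      θ - c * M / (M + 1 : ℕ) + c := by push_cast; field_simp; ring
  simp only [Nat.succ_eq_add_one]
  rw [Finset.sum_range_succ', Finset.sum_range_succ, hwrap, hf]
  simp only [hshift]

variable {N} in
theorem sum_norm_analyticDirichletKernel_le (hN : N ≠ 0) :
    ∑ k ∈ Finset.range N, ‖analyticDirichletKernel N (θ - 2 * π * k / N)‖ ≤
      N * (3 + 2 * log N) := by
  have hper := periodic_sum_range_sub_mul_div
    (f := fun t => ‖analyticDirichletKernel N t‖) (c := 2 * π)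
    (fun t => congrArg norm (periodic_analyticDirichletKernel N t)) hN
  obtain ⟨θ₀, hθ₀, heq⟩ := hper.exists_mem_Ico (by positivity) θ (-(π / N))
  have hθ₀' : |θ₀| ≤ π / N :=
    abs_le.2 ⟨hθ₀.1, hθ₀.2.le.trans_eq (by ring)⟩
  exact heq.trans_le (sum_norm_analyticDirichletKernel_le_of_abs_le hN hθ₀')

end Kernel

section UnitCircle

variable {N : ℕ} {P : Polynomial ℂ} {B : ℝ}

theorem circleExp_two_pi_div_pow (N k : ℕ) :
    (Circle.exp (2 * π / N) : ℂ) ^ k = Circle.exp (2 * π * k / N) := by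
  rw [← Circle.coe_pow, ← Circle.exp_natCast_mul]
  congr 2
  ring

theorem isPrimitiveRoot_circleExp_two_pi_div (hN : N ≠ 0) :
    IsPrimitiveRoot (Circle.exp (2 * π / N) : ℂ) N := by
  convert Complex.isPrimitiveRoot_exp N hN using 1
  rw [Circle.coe_exp]
  congr 1
  push_cast
  ring

theorem natCast_mul_eval_circleExp_eq_sum (hP : P.natDegree < N) (θ : ℝ) :
    N * P.eval (Circle.exp θ : ℂ) = ∑ k ∈ Finset.range N,
      P.eval (Circle.exp (2 * π * k / N) : ℂ) * analyticDirichletKernel N (θ - 2 * π * k / N) := by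
  rw [natCast_mul_eval_eq_sum_eval (isPrimitiveRoot_circleExp_two_pi_div (by omega)) hP]
  simp only [circleExp_two_pi_div_pow, analyticDirichletKernel, Circle.exp_sub, Circle.coe_div]

theorem norm_eval_circleExp_le_of_natDegree_lt (hP : P.natDegree < N)
    (h : ∀ k < N, ‖P.eval (Circle.exp (2 * π * k / N) : ℂ)‖ ≤ B) (θ : ℝ) :
    ‖P.eval (Circle.exp θ : ℂ)‖ ≤ (3 + 2 * log N) * B := by
  have hN : 0 < N := by omega
  have hB : 0 ≤ B := (norm_nonneg _).trans (h 0 hN)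
  refine le_of_mul_le_mul_left ?_ (Nat.cast_pos.2 hN : (0 : ℝ) < N)
  calc N * ‖P.eval (Circle.exp θ : ℂ)‖
      = ‖∑ k ∈ Finset.range N, P.eval (Circle.exp (2 * π * k / N) : ℂ) *
          analyticDirichletKernel N (θ - 2 * π * k / N)‖ := by
        rw [← natCast_mul_eval_circleExp_eq_sum hP, norm_mul, Complex.norm_natCast]
    _ ≤ ∑ k ∈ Finset.range N, B * ‖analyticDirichletKernel N (θ - 2 * π * k / N)‖ := by
        refine norm_sum_le_of_le _ fun k hk => ?_
        rw [norm_mul]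
        gcongr
        exact h k (Finset.mem_range.1 hk)
    _ ≤ B * (N * (3 + 2 * log N)) := by
        rw [← Finset.mul_sum]
        gcongr
        exact sum_norm_analyticDirichletKernel_le θ hN.ne'
    _ = N * ((3 + 2 * log N) * B) := by ring

theorem norm_coeff_zero_add_coeff_le (hN : N ≠ 0) (hP : P.natDegree ≤ N)
    (h : ∀ k < N, ‖P.eval (Circle.exp (2 * π * k / N) : ℂ)‖ ≤ B) :
    ‖P.coeff 0 + P.coeff N‖ ≤ B := by
  refine le_of_mul_le_mul_left ?_ (Nat.cast_pos.2 (Nat.pos_of_ne_zero hN) : (0 : ℝ) < N)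
  rw [← Complex.norm_natCast, ← norm_mul, ← sum_eval_eq_mul_coeff_zero_add_coeff
    (isPrimitiveRoot_circleExp_two_pi_div hN) hN hP, Complex.norm_natCast]
  simp only [circleExp_two_pi_div_pow]
  refine (norm_sum_le_of_le _ fun k hk => h k (Finset.mem_range.1 hk)).trans_eq ?_
  rw [Finset.sum_const, Finset.card_range, nsmul_eq_mul]

theorem norm_eval_circleExp_le_of_coeff_zero_eq (hN : N ≠ 0) (hP : P.natDegree ≤ N)
    (hsymm : P.coeff 0 = P.coeff N)
    (h : ∀ k < N, ‖P.eval (Circle.exp (2 * π * k / N) : ℂ)‖ ≤ B) (θ : ℝ) :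
    ‖P.eval (Circle.exp θ : ℂ)‖ ≤ (5 + 3 * log N) * B := by
  have hlead : ‖P.coeff N‖ ≤ B / 2 := by
    have h₂ := norm_coeff_zero_add_coeff_le hN hP h
    rw [hsymm, ← two_mul, norm_mul, Complex.norm_two] at h₂
    linarith
  have htop : ∀ t : ℝ, ‖P.coeff N * (Circle.exp t : ℂ) ^ N‖ ≤ B / 2 := fun t => by
    rwa [norm_mul, norm_pow, Circle.norm_coe, one_pow, mul_one]
  have herase : ∀ k < N, ‖(P.erase N).eval (Circle.exp (2 * π * k / N) : ℂ)‖ ≤ B + B / 2 :=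
    fun k hk => by
      rw [← sub_eq_of_eq_add (eval_eq_eval_erase_add P N _)]
      exact norm_sub_le_of_le (h k hk) (htop _)
  rw [eval_eq_eval_erase_add P N]
  calc ‖(P.erase N).eval (Circle.exp θ : ℂ) + P.coeff N * (Circle.exp θ : ℂ) ^ N‖
      ≤ (3 + 2 * log N) * (B + B / 2) + B / 2 := norm_add_le_of_le
        (norm_eval_circleExp_le_of_natDegree_lt (natDegree_erase_lt hN hP) herase θ) (htop θ)
    _ = (5 + 3 * log N) * B := by ring

theorem infinite_range_coe_circleExp : (range fun θ : ℝ => (Circle.exp θ : ℂ)).Infinite := by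
  have hinj : InjOn (fun θ : ℝ => (Circle.exp θ : ℂ)) (Ico 0 (2 * π)) :=
    Circle.coe_injective.comp_injOn (Circle.exp_injOn_Ico (by rw [sub_zero]))
  exact ((Ico_infinite two_pi_pos).image hinj).mono (image_subset_range _ _)

end UnitCircle

/-- `f` is a trigonometric polynomial of degree at most `n`: a linear combination of `e^{ikθ}` for
`-n ≤ k ≤ n`. Multiplication by `e^{inθ}` turns it into an algebraic polynomial in `e^{iθ}`. -/
def IsTrigPolynomial (n : ℕ) (f : ℝ → ℂ) : Prop :=
  ∃ P : Polynomial ℂ, P.natDegree ≤ 2 * n ∧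
    ∀ θ : ℝ, P.eval (Circle.exp θ : ℂ) = (Circle.exp θ : ℂ) ^ n * f θ

namespace IsTrigPolynomial

variable {m n : ℕ} {f g : ℝ → ℂ}

theorem const (c : ℂ) : IsTrigPolynomial 0 fun _ => c :=
  ⟨Polynomial.C c, by simp, by simp⟩

theorem ofReal_cos : IsTrigPolynomial 1 fun θ => (cos θ : ℂ) := by
  refine ⟨Polynomial.C (1 / 2) * (Polynomial.X ^ 2 + 1), by compute_degree, fun θ => ?_⟩
  have hexp : Complex.exp (θ * Complex.I) * Complex.exp (-θ * Complex.I) = 1 := by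
    rw [← Complex.exp_add]; simp
  simp only [Polynomial.eval_mul, Polynomial.eval_add, Polynomial.eval_pow, Polynomial.eval_C,
    Polynomial.eval_X, Polynomial.eval_one, Circle.coe_exp, Complex.ofReal_cos, Complex.cos]
  linear_combination -hexp / 2

theorem ofReal_sin : IsTrigPolynomial 1 fun θ => (sin θ : ℂ) := by
  refine ⟨Polynomial.C (Complex.I / 2) * (1 - Polynomial.X ^ 2), by compute_degree, fun θ => ?_⟩
  have hexp : Complex.exp (θ * Complex.I) * Complex.exp (-θ * Complex.I) = 1 := by
    rw [← Complex.exp_add]; simp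
  simp only [Polynomial.eval_mul, Polynomial.eval_sub, Polynomial.eval_pow, Polynomial.eval_C,
    Polynomial.eval_X, Polynomial.eval_one, Circle.coe_exp, Complex.ofReal_sin, Complex.sin]
  linear_combination -Complex.I / 2 * hexp

theorem mono (hf : IsTrigPolynomial m f) (hmn : m ≤ n) : IsTrigPolynomial n f := by
  obtain ⟨P, hP, hPf⟩ := hf
  refine ⟨Polynomial.X ^ (n - m) * P, ?_, fun θ => ?_⟩
  · have := Polynomial.natDegree_mul_le_of_le (Polynomial.natDegree_X_pow_le (R := ℂ) (n - m)) hP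
    omega
  · rw [Polynomial.eval_mul, Polynomial.eval_pow, Polynomial.eval_X, hPf, ← mul_assoc, ← pow_add,
      Nat.sub_add_cancel hmn]

theorem add (hf : IsTrigPolynomial n f) (hg : IsTrigPolynomial n g) :
    IsTrigPolynomial n fun θ => f θ + g θ := by
  obtain ⟨P, hP, hPf⟩ := hf
  obtain ⟨Q, hQ, hQg⟩ := hg
  exact ⟨P + Q, Polynomial.natDegree_add_le_of_degree_le hP hQ, fun θ => by
    rw [Polynomial.eval_add, hPf, hQg, mul_add]⟩

theorem mul (hf : IsTrigPolynomial m f) (hg : IsTrigPolynomial n g) :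
    IsTrigPolynomial (m + n) fun θ => f θ * g θ := by
  obtain ⟨P, hP, hPf⟩ := hf
  obtain ⟨Q, hQ, hQg⟩ := hg
  refine ⟨P * Q, (Polynomial.natDegree_mul_le_of_le hP hQ).trans_eq (by ring), fun θ => ?_⟩
  rw [Polynomial.eval_mul, hPf, hQg, pow_add, mul_mul_mul_comm]

theorem const_mul (c : ℂ) (hf : IsTrigPolynomial n f) : IsTrigPolynomial n fun θ => c * f θ := by
  simpa only [zero_add] using (const c).mul hf

theorem sum {ι : Type*} {s : Finset ι} {f : ι → ℝ → ℂ} (hf : ∀ i ∈ s, IsTrigPolynomial n (f i)) :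
    IsTrigPolynomial n fun θ => ∑ i ∈ s, f i θ := by
  classical
  induction s using Finset.induction with
  | empty => simpa only [Finset.sum_empty] using (const 0).mono n.zero_le
  | insert i s his ih =>
    simp only [Finset.sum_insert his]
    exact (hf i (Finset.mem_insert_self i s)).add
      (ih fun j hj => hf j (Finset.mem_insert_of_mem hj))

theorem prod {ι : Type*} {s : Finset ι} {d : ι → ℕ} {f : ι → ℝ → ℂ}
    (hf : ∀ i ∈ s, IsTrigPolynomial (d i) (f i)) :
    IsTrigPolynomial (∑ i ∈ s, d i) fun θ => ∏ i ∈ s, f i θ := by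
  classical
  induction s using Finset.induction with
  | empty => simpa only [Finset.prod_empty, Finset.sum_empty] using const 1
  | insert i s his ih =>
    simp only [Finset.prod_insert his, Finset.sum_insert his]
    exact (hf i (Finset.mem_insert_self i s)).mul
      (ih fun j hj => hf j (Finset.mem_insert_of_mem hj))

theorem pow (hf : IsTrigPolynomial m f) (k : ℕ) : IsTrigPolynomial (k * m) fun θ => f θ ^ k := by
  simpa using prod (s := Finset.range k) fun _ _ => hf

theorem aeval {R σ : Type*} [CommSemiring R] [Algebra R ℂ] {p : MvPolynomial σ R}
    (hp : p.totalDegree ≤ n) {f : σ → ℝ → ℂ} (hf : ∀ i, IsTrigPolynomial 1 (f i)) :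
    IsTrigPolynomial n fun θ => MvPolynomial.aeval (fun i => f i θ) p := by
  simp only [MvPolynomial.aeval_def, MvPolynomial.eval₂_eq]
  refine sum fun d hd => const_mul _ ((prod fun i _ => (hf i).pow (d i)).mono ?_)
  simpa only [mul_one, Finsupp.sum] using (MvPolynomial.le_totalDegree hd).trans hp

theorem ofReal_eval {σ : Type*} {p : MvPolynomial σ ℝ} (hp : p.totalDegree ≤ n) {f : ℝ → σ → ℝ}
    (hf : ∀ i, IsTrigPolynomial 1 fun θ => (f θ i : ℂ)) :
    IsTrigPolynomial n fun θ => ((eval (f θ) p : ℝ) : ℂ) := by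
  have h := aeval hp hf
  have hcast : ∀ θ, MvPolynomial.aeval (fun i => (f θ i : ℂ)) p = ((eval (f θ) p : ℝ) : ℂ) :=
    fun θ => (aeval_algebraMap_apply ℂ (f θ) p).trans (by rw [aeval_eq_eval]; rfl)
  simpa only [hcast] using h

theorem periodic (hf : IsTrigPolynomial n f) : Function.Periodic f (2 * π) := by
  obtain ⟨P, -, hPf⟩ := hf
  intro θ
  refine mul_left_cancel₀ (pow_ne_zero n (Circle.coe_ne_zero (Circle.exp θ))) ?_
  rw [← hPf θ, ← Circle.exp_add_two_pi θ, hPf]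

theorem norm_eval_circleExp_eq {P : Polynomial ℂ}
    (hPf : ∀ θ : ℝ, P.eval (Circle.exp θ : ℂ) = (Circle.exp θ : ℂ) ^ n * f θ) (θ : ℝ) :
    ‖P.eval (Circle.exp θ : ℂ)‖ = ‖f θ‖ := by
  rw [hPf, norm_mul, norm_pow, Circle.norm_coe, one_pow, one_mul]

theorem norm_le {B : ℝ} (hf : IsTrigPolynomial n f)
    (h : ∀ k ≤ 2 * n, ‖f (2 * π * k / (2 * n + 1))‖ ≤ B) (θ : ℝ) :
    ‖f θ‖ ≤ (3 + 2 * log (2 * n + 1)) * B := by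
  obtain ⟨P, hP, hPf⟩ := hf
  have hbound := norm_eval_circleExp_le_of_natDegree_lt (Nat.lt_succ_of_le hP) (B := B)
    (fun k hk => by
      rw [norm_eval_circleExp_eq hPf]
      exact_mod_cast h k (Nat.le_of_lt_succ hk)) θ
  rw [norm_eval_circleExp_eq hPf] at hbound
  exact_mod_cast hbound

theorem reflect_eq_self_of_even {P : Polynomial ℂ} (hP : P.natDegree ≤ 2 * n)
    (hPf : ∀ θ : ℝ, P.eval (Circle.exp θ : ℂ) = (Circle.exp θ : ℂ) ^ n * f θ) (hf : f.Even) :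
    P.reflect (2 * n) = P := by
  refine Polynomial.eq_of_infinite_eval_eq _ _ (infinite_range_coe_circleExp.mono ?_)
  rintro _ ⟨θ, rfl⟩
  have hz : (Circle.exp θ : ℂ) ≠ 0 := Circle.coe_ne_zero _
  let := invertibleOfNonzero (inv_ne_zero hz)
  have hreflect := Polynomial.eval₂_reflect_mul_pow (RingHom.id ℂ) (Circle.exp θ : ℂ)⁻¹ (2 * n) P hP
  have hneg := hPf (-θ)
  rw [hf θ, Circle.exp_neg, Circle.coe_inv] at hneg
  rw [invOf_eq_inv, inv_inv] at hreflect
  simp only [Polynomial.eval₂_id] at hreflect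
  rw [hneg, inv_pow, inv_pow, ← div_eq_mul_inv, div_eq_iff (pow_ne_zero _ hz)] at hreflect
  rw [mem_ofPred_eq, hreflect, hPf]
  field_simp
  ring

theorem norm_le_of_even {B : ℝ} (hn : n ≠ 0) (hf : IsTrigPolynomial n f) (heven : f.Even)
    (h : ∀ j ≤ n, ‖f (j * π / n)‖ ≤ B) (θ : ℝ) :
    ‖f θ‖ ≤ (5 + 3 * log (2 * n)) * B := by
  have hper := hf.periodic
  obtain ⟨P, hP, hPf⟩ := hf
  have hsymm : P.coeff 0 = P.coeff (2 * n) := by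
    have hrev := congrArg (Polynomial.coeff · (2 * n)) (reflect_eq_self_of_even hP hPf heven)
    simpa [Polynomial.coeff_reflect, Polynomial.revAt_le] using hrev
  have hnode : ∀ k < 2 * n, ‖f (2 * π * k / (2 * n : ℕ))‖ ≤ B := fun k hk => by
    rcases le_total k n with hkn | hkn
    · convert h k hkn using 3
      push_cast
      field_simp
    · convert h (2 * n - k) (by omega) using 2
      rw [← hper.sub_eq, ← heven]
      congr 1
      rw [Nat.cast_sub hk.le]
      push_cast
      field_simp
      ring
  have hbound := norm_eval_circleExp_le_of_coeff_zero_eq (mul_ne_zero two_ne_zero hn) hP hsymm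
    (fun k hk => (norm_eval_circleExp_eq hPf _).trans_le (hnode k hk)) θ
  rw [norm_eval_circleExp_eq hPf] at hbound
  exact_mod_cast hbound

end IsTrigPolynomial

section Disk

theorem exists_polar_of_sq_add_sq_le_one {x : Fin 2 → ℝ} (hx : x 0 ^ 2 + x 1 ^ 2 ≤ 1) :
    ∃ ψ φ : ℝ, x = ![(1 / 2 + 1 / 2 * cos ψ) * cos φ, (1 / 2 + 1 / 2 * cos ψ) * sin φ] := by
  set z : ℂ := ⟨x 0, x 1⟩
  have hz₁ : ‖z‖ ≤ 1 := by
    rw [← sq_le_one_iff₀ (norm_nonneg z), ← Complex.normSq_eq_norm_sq, Complex.normSq_mk]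
    linarith
  have hradius : 1 / 2 + 1 / 2 * cos (arccos (2 * ‖z‖ - 1)) = ‖z‖ := by
    rw [cos_arccos (by linarith [norm_nonneg z]) (by linarith)]
    ring
  refine ⟨arccos (2 * ‖z‖ - 1), z.arg, ?_⟩
  rw [hradius, Complex.norm_mul_cos_arg, Complex.norm_mul_sin_arg]
  ext i
  fin_cases i <;> rfl

variable {p : MvPolynomial (Fin 2) ℝ} {n : ℕ}

theorem isTrigPolynomial_eval_circle (hp : p.totalDegree ≤ n) (r : ℝ) :
    IsTrigPolynomial n fun φ => ((eval ![r * cos φ, r * sin φ] p : ℝ) : ℂ) := by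
  refine IsTrigPolynomial.ofReal_eval hp fun i => ?_
  fin_cases i
  · simpa using IsTrigPolynomial.ofReal_cos.const_mul r
  · simpa using IsTrigPolynomial.ofReal_sin.const_mul r

theorem isTrigPolynomial_eval_ray (hp : p.totalDegree ≤ n) (a b : ℝ) :
    IsTrigPolynomial n fun ψ => ((eval ![(1 / 2 + 1 / 2 * cos ψ) * a,
      (1 / 2 + 1 / 2 * cos ψ) * b] p : ℝ) : ℂ) := by
  have hradius : IsTrigPolynomial 1 fun ψ => 1 / 2 + 1 / 2 * (cos ψ : ℂ) :=
    ((IsTrigPolynomial.const (1 / 2)).mono zero_le_one).add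
      (IsTrigPolynomial.ofReal_cos.const_mul (1 / 2))
  refine IsTrigPolynomial.ofReal_eval hp fun i => ?_
  fin_cases i
  · simpa [mul_comm] using hradius.const_mul a
  · simpa [mul_comm] using hradius.const_mul b

theorem abs_eval_le_of_abs_eval_polar_grid_le {B : ℝ} (hn : n ≠ 0) (hp : p.totalDegree ≤ n)
    (h : ∀ j ≤ n, ∀ k ≤ 2 * n,
      |eval ![(1 / 2 + 1 / 2 * cos (j * π / n)) * cos (2 * π * k / (2 * n + 1)),
        (1 / 2 + 1 / 2 * cos (j * π / n)) * sin (2 * π * k / (2 * n + 1))] p| ≤ B)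
    {x : Fin 2 → ℝ} (hx : x 0 ^ 2 + x 1 ^ 2 ≤ 1) :
    |eval x p| ≤ (5 + 3 * log (2 * n)) * (3 + 2 * log (2 * n + 1)) * B := by
  rw [mul_assoc]
  obtain ⟨ψ, φ, rfl⟩ := exists_polar_of_sq_add_sq_le_one hx
  simp only [← Real.norm_eq_abs, ← Complex.norm_real] at h ⊢
  have hangular : ∀ j ≤ n, ‖((eval ![(1 / 2 + 1 / 2 * cos (j * π / n)) * cos φ,
      (1 / 2 + 1 / 2 * cos (j * π / n)) * sin φ] p : ℝ) : ℂ)‖ ≤ (3 + 2 * log (2 * n + 1)) * B :=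
    fun j hj => (isTrigPolynomial_eval_circle hp _).norm_le (h j hj) φ
  exact (isTrigPolynomial_eval_ray hp (cos φ) (sin φ)).norm_le_of_even hn
    (fun ψ => by simp only [cos_neg]) hangular ψ

theorem log_factors_le {n : ℕ} (hn : 2 ≤ n) :
    (5 + 3 * log (2 * n)) * (3 + 2 * log (2 * n + 1)) ≤ 192 * log n ^ 2 := by
  have hn' : (2 : ℝ) ≤ n := by exact_mod_cast hn
  have hlog : 1 / 2 ≤ log n := by
    linarith [log_two_gt_d9, log_le_log two_pos hn']
  have hradial : log (2 * n) ≤ 2 * log n := by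
    rw [← log_rpow (by linarith), rpow_two]
    exact log_le_log (by linarith) (by nlinarith)
  have hangular : log (2 * n + 1) ≤ 3 * log n := by
    rw [← Nat.cast_ofNat (n := 3), ← log_pow]
    exact log_le_log (by linarith) (by nlinarith [sq_nonneg (n : ℝ)])
  have hnonneg : 0 ≤ log (2 * (n : ℝ) + 1) := log_nonneg (by linarith)
  calc (5 + 3 * log (2 * n)) * (3 + 2 * log (2 * n + 1))
      ≤ (16 * log n) * (12 * log n) :=
        mul_le_mul (by linarith) (by linarith) (by linarith) (by linarith)
    _ = 192 * log n ^ 2 := by ring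

end Disk

/-- There exists a constant `c > 0` such that for every integer `n ≥ 2`
and every real polynomial `p` in two variables of total degree at most `n`, the maximum
of `|p|` over the closed unit disk is bounded by `c (log n)²` times the maximum of `|p|`
over the polar grid with radii `r_j = 1/2 + (1/2)cos(jπ/n)`, `0 ≤ j ≤ n`, and angles
`φ_k = 2πk/(2n+1)`, `0 ≤ k ≤ 2n`. -/
theorem stmt0 :
    ∃ c : ℝ, 0 < c ∧
      ∀ n : ℕ, 2 ≤ n →
        ∀ p : MvPolynomial (Fin 2) ℝ, p.totalDegree ≤ n →
          ∀ x : Fin 2 → ℝ, x 0 ^ 2 + x 1 ^ 2 ≤ 1 →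
            |MvPolynomial.eval x p| ≤
              c * Real.log n ^ 2 *
                sSup ((fun jk : ℕ × ℕ =>
                    |MvPolynomial.eval
                        ![(1 / 2 + 1 / 2 * Real.cos (jk.1 * π / n)) *
                            Real.cos (2 * π * jk.2 / (2 * n + 1)),
                          (1 / 2 + 1 / 2 * Real.cos (jk.1 * π / n)) *
                            Real.sin (2 * π * jk.2 / (2 * n + 1))] p|) ''
                  {jk : ℕ × ℕ | jk.1 ≤ n ∧ jk.2 ≤ 2 * n}) := by
  refine ⟨192, by norm_num, fun n hn p hp x hx => ?_⟩
  have hgrid : {jk : ℕ × ℕ | jk.1 ≤ n ∧ jk.2 ≤ 2 * n}.Finite :=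
    (finite_Iic (n, 2 * n)).subset fun _ hjk => hjk
  refine le_trans ?_ (mul_le_mul_of_nonneg_right (log_factors_le hn) (sSup_nonneg ?_))
  · exact abs_eval_le_of_abs_eval_polar_grid_le (by omega) hp (fun j hj k hk =>
      le_csSup (hgrid.image _).bddAbove ⟨(j, k), ⟨hj, hk⟩, rfl⟩) hx
  · rintro _ ⟨jk, -, rfl⟩
    exact abs_nonneg _
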